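/- arXiv:2011.13977 — 2 statements merged into one kernel-verified Lean document; each statement's English description precedes it below -/
import Mathlib

section
/- Let I be an instance with n ≥ 2 agents and n objects, and let p = (p_1,...,p_n) be given by p_j = n^{2n} + n^{2(n-j)} for all j ∈ [n]. Then a matching μ of G_I is max-cardinality rank-maximal if and only if μ is a priority-p matching. -/
open Finset
open scoped Classical

/-- A one-sided matching instance with `n` agents and `n` objects.  Agent `i` has a
nonempty acceptable set `accept i` and a weak order `pref i` on it
(`pref i h h'` means agent `i` weakly prefers object `h` to object `h'`). -/
structure OSMInstance (n : ℕ) where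
  accept : Fin n → Finset (Fin n)
  accept_nonempty : ∀ i, (accept i).Nonempty
  pref : Fin n → Fin n → Fin n → Prop
  pref_refl : ∀ i h, h ∈ accept i → pref i h h
  pref_trans : ∀ i h₁ h₂ h₃, h₁ ∈ accept i → h₂ ∈ accept i → h₃ ∈ accept i →
    pref i h₁ h₂ → pref i h₂ h₃ → pref i h₁ h₃
  pref_total : ∀ i h₁ h₂, h₁ ∈ accept i → h₂ ∈ accept i → pref i h₁ h₂ ∨ pref i h₂ h₁

namespace OSMInstance

variable {n : ℕ}

/-- Agent `i` strictly prefers object `h` to object `h'`. -/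
def strictPref (I : OSMInstance n) (i h h' : Fin n) : Prop :=
  I.pref i h h' ∧ ¬ I.pref i h' h

/-- The rank of the edge `(i, h)` of `G_I`: one plus the number of acceptable objects
that agent `i` strictly prefers to `h`. -/
noncomputable def edgeRank (I : OSMInstance n) (e : Fin n × Fin n) : ℕ :=
  ((I.accept e.1).filter (fun h' => I.strictPref e.1 h' e.2)).card + 1

/-- A matching of `G_I`: a set of acceptable (agent, object) pairs in which every agent
and every object occurs at most once. -/
def IsMatching (I : OSMInstance n) (μ : Finset (Fin n × Fin n)) : Prop :=
  (∀ e ∈ μ, e.2 ∈ I.accept e.1) ∧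
  (∀ e ∈ μ, ∀ e' ∈ μ, e.1 = e'.1 → e = e') ∧
  (∀ e ∈ μ, ∀ e' ∈ μ, e.2 = e'.2 → e = e')

/-- Total weight of a set of edges under the edge weights `w`. -/
def weightSum (w : Fin n × Fin n → ℝ) (μ : Finset (Fin n × Fin n)) : ℝ :=
  ∑ e ∈ μ, w e

/-- Social welfare of the set of edges `μ` under the valuation profile `v`. -/
def SW (_I : OSMInstance n) (v : Fin n → Fin n → ℝ) (μ : Finset (Fin n × Fin n)) : ℝ :=
  ∑ e ∈ μ, v e.1 e.2

/-- `μ` is a maximum-weight matching of `G_I` with respect to edge weights `w`. -/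
def IsMaxWeightMatching (I : OSMInstance n) (w : Fin n × Fin n → ℝ)
    (μ : Finset (Fin n × Fin n)) : Prop :=
  I.IsMatching μ ∧ ∀ μ', I.IsMatching μ' → weightSum w μ' ≤ weightSum w μ

/-- `μ` is a priority-`p` matching: a maximum-weight matching when every rank-`r` edge
gets weight `p r`. -/
noncomputable def IsPriorityMatching (I : OSMInstance n) (p : ℕ → ℝ)
    (μ : Finset (Fin n × Fin n)) : Prop :=
  I.IsMaxWeightMatching (fun e => p (I.edgeRank e)) μ

/-- `v` is a valuation profile consistent with the instance: values lie in `[0,1]`,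
unacceptable objects have value `0`, and on acceptable objects the values represent
the weak order. -/
def Consistent (I : OSMInstance n) (v : Fin n → Fin n → ℝ) : Prop :=
  (∀ i h, 0 ≤ v i h ∧ v i h ≤ 1) ∧
  (∀ i h, h ∉ I.accept i → v i h = 0) ∧
  (∀ i h h', h ∈ I.accept i → h' ∈ I.accept i → (I.pref i h h' ↔ v i h' ≤ v i h))

/-- Unit-sum valuations: each agent's values over acceptable objects sum to `1`. -/
def UnitSum (I : OSMInstance n) (v : Fin n → Fin n → ℝ) : Prop :=
  ∀ i, ∑ h ∈ I.accept i, v i h = 1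

/-- Unit-range valuations: each agent values some acceptable object `1`, some
acceptable object `0`, and has two non-equivalent acceptable objects. -/
def UnitRange (I : OSMInstance n) (v : Fin n → Fin n → ℝ) : Prop :=
  ∀ i, (∃ h ∈ I.accept i, v i h = 1) ∧ (∃ h ∈ I.accept i, v i h = 0) ∧
    ∃ h ∈ I.accept i, ∃ h' ∈ I.accept i, I.strictPref i h h'

/-- Agent `i` is unmatched in `μ`. -/
def Unmatched (_I : OSMInstance n) (μ : Finset (Fin n × Fin n)) (i : Fin n) : Prop :=
  ∀ h, (i, h) ∉ μ

/-- Agent `i` weakly prefers their allocation in `μ'` to their allocation in `μ`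
(being unmatched is strictly worse than receiving any acceptable object). -/
def WeakImprove (I : OSMInstance n) (μ' μ : Finset (Fin n × Fin n)) (i : Fin n) : Prop :=
  I.Unmatched μ i ∨ ∃ h h', (i, h) ∈ μ ∧ (i, h') ∈ μ' ∧ I.pref i h' h

/-- Agent `i` strictly prefers their allocation in `μ'` to their allocation in `μ`. -/
def StrictImprove (I : OSMInstance n) (μ' μ : Finset (Fin n × Fin n)) (i : Fin n) : Prop :=
  (I.Unmatched μ i ∧ ∃ h', (i, h') ∈ μ') ∨
    ∃ h h', (i, h) ∈ μ ∧ (i, h') ∈ μ' ∧ I.strictPref i h' h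

/-- `μ` is a Pareto optimal matching of `G_I`. -/
def ParetoOptimal (I : OSMInstance n) (μ : Finset (Fin n × Fin n)) : Prop :=
  I.IsMatching μ ∧
    ¬ ∃ μ', I.IsMatching μ' ∧ (∀ i, I.WeakImprove μ' μ i) ∧ ∃ i, I.StrictImprove μ' μ i

/-- `sig I μ r` is the number of rank-`r` edges of `μ` (as an integer). -/
noncomputable def sig (I : OSMInstance n) (μ : Finset (Fin n × Fin n)) (r : ℕ) : ℤ :=
  ((μ.filter (fun e => I.edgeRank e = r)).card : ℤ)

end OSMInstance

/-- Lexicographic comparison `f ≤ g` of the length-`len` tuples `(f 0, …, f (len-1))`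
and `(g 0, …, g (len-1))`. -/
def LexLe (len : ℕ) (f g : ℕ → ℤ) : Prop :=
  (∀ j < len, f j = g j) ∨ ∃ j < len, (∀ i < j, f i = g i) ∧ f j < g j

namespace OSMInstance

variable {n : ℕ}

/-- `μ` is a rank-maximal matching: it lexicographically maximizes `(s_1, …, s_n)`. -/
noncomputable def RankMaximal (I : OSMInstance n) (μ : Finset (Fin n × Fin n)) : Prop :=
  I.IsMatching μ ∧ ∀ μ', I.IsMatching μ' →
    LexLe n (fun j => I.sig μ' (j + 1)) (fun j => I.sig μ (j + 1))

/-- `μ` is a max-cardinality rank-maximal matching: it lexicographically maximizes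
`(Σ_i s_i, s_1, …, s_n)`. -/
noncomputable def MaxCardRankMaximal (I : OSMInstance n) (μ : Finset (Fin n × Fin n)) : Prop :=
  I.IsMatching μ ∧ ∀ μ', I.IsMatching μ' →
    LexLe (n + 1) (fun j => if j = 0 then (μ'.card : ℤ) else I.sig μ' j)
      (fun j => if j = 0 then (μ.card : ℤ) else I.sig μ j)

/-- `μ` is a fair matching: it lexicographically maximizes
`(Σ_i s_i, -s_n, -s_(n-1), …, -s_1)`. -/
noncomputable def FairMatching (I : OSMInstance n) (μ : Finset (Fin n × Fin n)) : Prop :=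
  I.IsMatching μ ∧ ∀ μ', I.IsMatching μ' →
    LexLe (n + 1) (fun j => if j = 0 then (μ'.card : ℤ) else -I.sig μ' (n + 1 - j))
      (fun j => if j = 0 then (μ.card : ℤ) else -I.sig μ (n + 1 - j))

end OSMInstance

/-- The priority vector for rank-maximal matchings: a rank-`r` edge gets weight
`n ^ (2 * (n - r + 1))`. -/
noncomputable def pRankMaximal (n : ℕ) : ℕ → ℝ :=
  fun r => (n : ℝ) ^ (2 * (n - r + 1))

/-- The priority vector for max-cardinality rank-maximal matchings: a rank-`r` edge gets
weight `n ^ (2 * n) + n ^ (2 * (n - r))`. -/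
noncomputable def pMaxCardRankMaximal (n : ℕ) : ℕ → ℝ :=
  fun r => (n : ℝ) ^ (2 * n) + (n : ℝ) ^ (2 * (n - r))

/-- The priority vector for fair matchings: a rank-`r` edge gets weight
`4 * n ^ (2 * n) - 2 * n ^ (r - 1)`. -/
noncomputable def pFairVec (n : ℕ) : ℕ → ℝ :=
  fun r => 4 * (n : ℝ) ^ (2 * n) - 2 * (n : ℝ) ^ (r - 1)

/-- The set `𝕡` of the three priority vectors of interest. -/
noncomputable def PrioritySet (n : ℕ) : Set (ℕ → ℝ) :=
  {pRankMaximal n, pMaxCardRankMaximal n, pFairVec n}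

/-- The four matching properties considered: Pareto optimal, rank-maximal,
max-cardinality rank-maximal, and fair. -/
inductive MatchProp where
  | po | rm | mcrm | fair

/-- `μ` satisfies the property `X` with respect to the instance `I`. -/
noncomputable def SatisfiesProp {n : ℕ} (X : MatchProp) (I : OSMInstance n)
    (μ : Finset (Fin n × Fin n)) : Prop :=
  match X with
  | .po => I.ParetoOptimal μ
  | .rm => I.RankMaximal μ
  | .mcrm => I.MaxCardRankMaximal μ
  | .fair => I.FairMatching μ

/-!
Call `(|μ|, s_1, …, s_n)` the digits of a matching `μ`. Give a rank-`r` edge the weight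
`B ^ n + B ^ (n - r)`: the edge contributes one unit to digit `0` and one unit to digit `r`, so the
weight of `μ` is the number with these digits in base `B`, most significant digit first. The digits
of two matchings differ by at most `n`, so for `B ≥ n + 1` no carry can undo the first difference
and comparing weights is comparing digits lexicographically. The theorem is the case `B = n ^ 2`.
-/

theorem forall_lt_eq_or_exists_first_ne {α : Type*} (k : ℕ) (f g : ℕ → α) :
    (∀ j < k, f j = g j) ∨ ∃ j < k, (∀ i < j, f i = g i) ∧ f j ≠ g j := by
  refine or_iff_not_imp_left.2 fun hne => ?_
  have hex : ∃ j, j < k ∧ f j ≠ g j := by simpa using hne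
  obtain ⟨hj, hfirst⟩ := Nat.find_spec hex
  refine ⟨Nat.find hex, hj, fun i hi => ?_, hfirst⟩
  exact by_contra fun hne' => Nat.find_min hex hi ⟨hi.trans hj, hne'⟩

section Digits

variable {R : Type*} [CommRing R]

/-- The number written in base `B` with the `k` digits `d 0, …, d (k - 1)`, the most significant
digit first. The digits are arbitrary integers; as the value is additive in the digits, it is
bundled as a homomorphism. -/
def evalDigits (B : R) (k : ℕ) : (ℕ → ℤ) →+ R where
  toFun d := ∑ i ∈ range k, (d i : R) * B ^ (k - 1 - i)
  map_zero' := by simp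
  map_add' d d' := by simp [add_mul, sum_add_distrib]

theorem evalDigits_apply (B : R) (k : ℕ) (d : ℕ → ℤ) :
    evalDigits B k d = ∑ i ∈ range k, (d i : R) * B ^ (k - 1 - i) :=
  rfl

theorem evalDigits_succ (B : R) (k : ℕ) (d : ℕ → ℤ) :
    evalDigits B (k + 1) d = evalDigits B k d * B + d k := by
  have hshift : ∀ i ∈ range k,
      (d i : R) * B ^ (k + 1 - 1 - i) = d i * B ^ (k - 1 - i) * B := fun i hi => by
    have hik := mem_range.1 hi
    rw [mul_assoc, ← pow_succ, show k + 1 - 1 - i = k - 1 - i + 1 by omega]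
  rw [evalDigits_apply, evalDigits_apply, sum_range_succ, sum_congr rfl hshift, sum_mul]
  simp

theorem evalDigits_single (B : R) {j k : ℕ} (hjk : j < k) :
    evalDigits B k (Pi.single j 1) = B ^ (k - 1 - j) := by
  rw [evalDigits_apply, sum_eq_single_of_mem j (mem_range.2 hjk) fun i _ hij => by simp [hij]]
  simp

theorem evalDigits_congr (B : R) {k : ℕ} {d d' : ℕ → ℤ} (h : ∀ i < k, d i = d' i) :
    evalDigits B k d = evalDigits B k d' := by
  rw [evalDigits_apply, evalDigits_apply]
  exact sum_congr rfl fun i hi => by rw [h i (mem_range.1 hi)]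

variable [LinearOrder R] [IsStrictOrderedRing R] {B : R} {j k : ℕ}

theorem one_le_evalDigits {d : ℕ → ℤ} (hd : ∀ i < k, |(d i : R)| ≤ B - 1) (hjk : j < k)
    (hzero : ∀ i < j, d i = 0) (hpos : 0 < d j) : 1 ≤ evalDigits B k d := by
  induction k, hjk using Nat.le_induction with
  | base =>
    rw [evalDigits_succ, evalDigits_congr B hzero, ← Pi.zero_def, map_zero, zero_mul, zero_add]
    exact_mod_cast hpos
  | succ k _ ih =>
    have hdk : |(d k : R)| ≤ B - 1 := hd k k.lt_succ_self
    have hB : 0 ≤ B := by linarith [abs_nonneg (d k : R)]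
    calc (1 : R) ≤ 1 * B + d k := by linarith [neg_le_of_abs_le hdk]
      _ ≤ evalDigits B k d * B + d k := by
        gcongr
        exact ih fun i hi => hd i (hi.trans k.lt_succ_self)
      _ = evalDigits B (k + 1) d := (evalDigits_succ B k d).symm

theorem evalDigits_lt_evalDigits {f g : ℕ → ℤ} (hfg : ∀ i < k, |(g i - f i : R)| ≤ B - 1)
    (hjk : j < k) (heq : ∀ i < j, f i = g i) (hlt : f j < g j) :
    evalDigits B k f < evalDigits B k g := by
  have hone : 1 ≤ evalDigits B k (g - f) :=
    one_le_evalDigits (fun i hi => by simpa using hfg i hi) hjk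
      (fun i hi => sub_eq_zero.2 (heq i hi).symm) (sub_pos.2 hlt)
  rw [map_sub] at hone
  exact sub_pos.1 (one_pos.trans_le hone)

theorem lexLe_iff_evalDigits_le {f g : ℕ → ℤ} (hfg : ∀ i < k, |(g i - f i : R)| ≤ B - 1) :
    LexLe k f g ↔ evalDigits B k f ≤ evalDigits B k g := by
  constructor
  · rintro (heq | ⟨j, hjk, heq, hlt⟩)
    · exact (evalDigits_congr B heq).le
    · exact (evalDigits_lt_evalDigits hfg hjk heq hlt).le
  · intro hle
    obtain heq | ⟨j, hjk, heq, hne⟩ := forall_lt_eq_or_exists_first_ne k f g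
    · exact Or.inl heq
    · refine Or.inr ⟨j, hjk, heq, hne.lt_of_le (not_lt.1 fun hgt => hle.not_gt ?_)⟩
      exact evalDigits_lt_evalDigits (fun i hi => abs_sub_comm (f i : R) (g i) ▸ hfg i hi) hjk
        (fun i hi => (heq i hi).symm) hgt

end Digits

namespace OSMInstance

variable {n : ℕ} (I : OSMInstance n) (μ : Finset (Fin n × Fin n))

theorem edgeRank_ne_zero (e : Fin n × Fin n) : I.edgeRank e ≠ 0 :=
  Nat.succ_ne_zero _

theorem edgeRank_le (e : Fin n × Fin n) : I.edgeRank e ≤ n := by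
  have hself : e.2 ∉ (I.accept e.1).filter fun h => I.strictPref e.1 h e.2 :=
    fun hmem => (mem_filter.1 hmem).2.2 (mem_filter.1 hmem).2.1
  simpa [edgeRank] using card_lt_univ_of_notMem hself

/-- The tuple `(|μ|, s_1, s_2, …)` of a set of edges, with the cardinality at index `0`. -/
noncomputable def cardSig (j : ℕ) : ℤ :=
  if j = 0 then (μ.card : ℤ) else I.sig μ j

theorem cardSig_eq_sum :
    I.cardSig μ = ∑ e ∈ μ, (Pi.single 0 1 + Pi.single (I.edgeRank e) 1) := by
  funext j
  obtain rfl | hj := eq_or_ne j 0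
  · simp [cardSig, Finset.sum_apply, (I.edgeRank_ne_zero _).symm]
  · simp [cardSig, sig, Finset.sum_apply, Pi.single_apply, hj, eq_comm]

theorem weightSum_eq_evalDigits_cardSig (B : ℝ) :
    weightSum (fun e => B ^ n + B ^ (n - I.edgeRank e)) μ =
      evalDigits B (n + 1) (I.cardSig μ) := by
  rw [cardSig_eq_sum, map_sum]
  refine sum_congr rfl fun e _ => ?_
  rw [map_add, evalDigits_single B n.succ_pos,
    evalDigits_single B (Nat.lt_succ_of_le (I.edgeRank_le e))]
  simp

theorem cardSig_nonneg (j : ℕ) : 0 ≤ I.cardSig μ j := by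
  unfold cardSig sig
  split_ifs <;> positivity

theorem cardSig_le_card (j : ℕ) : I.cardSig μ j ≤ μ.card := by
  unfold cardSig sig
  split_ifs
  · exact le_rfl
  · exact_mod_cast card_filter_le μ _

variable {I μ}

theorem IsMatching.card_le (hμ : I.IsMatching μ) : μ.card ≤ n := by
  simpa using card_le_card_of_injOn Prod.fst (t := univ) (fun _ _ => mem_univ _) hμ.2.1

theorem IsMatching.abs_cardSig_sub_le {μ' : Finset (Fin n × Fin n)} (hμ : I.IsMatching μ)
    (hμ' : I.IsMatching μ') (j : ℕ) : |I.cardSig μ j - I.cardSig μ' j| ≤ n :=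
  abs_sub_le_of_nonneg_of_le (I.cardSig_nonneg μ j)
    ((I.cardSig_le_card μ j).trans (mod_cast hμ.card_le)) (I.cardSig_nonneg μ' j)
    ((I.cardSig_le_card μ' j).trans (mod_cast hμ'.card_le))

end OSMInstance

theorem pMaxCardRankMaximal_eq (n : ℕ) :
    pMaxCardRankMaximal n = fun r => ((n : ℝ) ^ 2) ^ n + ((n : ℝ) ^ 2) ^ (n - r) := by
  unfold pMaxCardRankMaximal
  simp only [pow_mul]

theorem maxCardRankMaximal_iff_priority_general {n : ℕ} (I : OSMInstance n) {B : ℝ}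
    (hB : n + 1 ≤ B) (μ : Finset (Fin n × Fin n)) :
    I.MaxCardRankMaximal μ ↔ I.IsPriorityMatching (fun r => B ^ n + B ^ (n - r)) μ := by
  refine and_congr_right fun hμ => forall₂_congr fun μ' hμ' => ?_
  have hdigits : ∀ j < n + 1, |(I.cardSig μ j - I.cardSig μ' j : ℝ)| ≤ B - 1 := fun j _ =>
    calc |(I.cardSig μ j - I.cardSig μ' j : ℝ)| ≤ n := mod_cast hμ.abs_cardSig_sub_le hμ' j
      _ ≤ B - 1 := le_sub_iff_add_le.2 hB
  rw [I.weightSum_eq_evalDigits_cardSig μ', I.weightSum_eq_evalDigits_cardSig μ]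
  exact lexLe_iff_evalDigits_le hdigits

/-- a matching is max-cardinality rank-maximal iff it is a priority-`p`
matching for `p_j = n^(2n) + n^(2(n-j))`. -/
theorem maxCardRankMaximal_iff_priority {n : ℕ} (hn : 2 ≤ n) (I : OSMInstance n)
    (μ : Finset (Fin n × Fin n)) (hμ : I.IsMatching μ) :
    I.MaxCardRankMaximal μ ↔ I.IsPriorityMatching (pMaxCardRankMaximal n) μ := by
  have hbase : n + 1 ≤ n ^ 2 := by nlinarith
  exact pMaxCardRankMaximal_eq n ▸ maxCardRankMaximal_iff_priority_general I (mod_cast hbase) μ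
end

section
/- Let I be an instance with n ≥ 2 agents and n objects, let p ∈ 𝕡, and let v be a unit-sum valuation profile consistent with I. Set t_1 = 1/n^{1/3} and t_i = 1/(min{i, n^{1/3}}·n^{2/3}) for 2 ≤ i ≤ n. Let μ be a maximum-weight matching of G_I under the weights assigning to each edge e = (a_i, h_j) of rank r the weight p_r + t_r if v_i(h_j) ≥ t_r and p_r otherwise. Then for every priority-p matching μ*, letting H = {(a_i, h_j) ∈ μ* : v_i(h_j) ≥ t_r where r is the rank of (a_i, h_j)}, it holds that Σ_{(a_i,h_j) ∈ H} v_i(h_j) ≤ n^{2/3}·SW(μ | v). -/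
open Finset
open scoped Classical

/-! Splitting the weights of `μ` as base weights plus a bonus of `t r` on each high-value edge of
rank `r`, the two optimality conditions together show that `μ` earns at least as much bonus as
`μstar`. The bonus of `μ` is at most its welfare. Conversely, a rank-`r` edge is worth at most
`1 / r`, since the agent values `r` objects at least that much and all values sum to at most `1`.
As `1 / r ≤ n ^ (2 / 3) * t r`, the high-value welfare of `μstar` is at most `n ^ (2 / 3)` times
its bonus. -/

namespace OSMInstance

variable {n : ℕ}

lemma not_strictPref_self (I : OSMInstance n) (i h : Fin n) : ¬ I.strictPref i h h :=
  fun hstrict => hstrict.2 hstrict.1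

lemma edgeRank_mem_Icc (I : OSMInstance n) (e : Fin n × Fin n) : I.edgeRank e ∈ Icc 1 n := by
  have hlt : ((I.accept e.1).filter fun h => I.strictPref e.1 h e.2).card < n := by
    have hself : e.2 ∉ (I.accept e.1).filter fun h => I.strictPref e.1 h e.2 :=
      fun h => I.not_strictPref_self _ _ (mem_filter.1 h).2
    simpa using card_lt_univ_of_notMem hself
  exact mem_Icc.2 ⟨Nat.le_add_left _ _, hlt⟩

lemma Consistent.edgeRank_mul_le_sum_accept {I : OSMInstance n} {v : Fin n → Fin n → ℝ}
    (hv : I.Consistent v) {e : Fin n × Fin n} (he : e.2 ∈ I.accept e.1) :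
    (I.edgeRank e : ℝ) * v e.1 e.2 ≤ ∑ h ∈ I.accept e.1, v e.1 h := by
  obtain ⟨hrange, -, hpref⟩ := hv
  set better := (I.accept e.1).filter fun h => I.strictPref e.1 h e.2 with hbetter
  have hself : e.2 ∉ better := fun h => I.not_strictPref_self _ _ (mem_filter.1 h).2
  have hle : ∀ h ∈ better, v e.1 e.2 ≤ v e.1 h := fun h hh =>
    (hpref e.1 h e.2 (mem_filter.1 hh).1 he).1 (mem_filter.1 hh).2.1
  calc (I.edgeRank e : ℝ) * v e.1 e.2
      = v e.1 e.2 + better.card • v e.1 e.2 := by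
        rw [edgeRank, ← hbetter, nsmul_eq_mul]; push_cast; ring
    _ ≤ v e.1 e.2 + ∑ h ∈ better, v e.1 h := by gcongr; exact card_nsmul_le_sum _ _ _ hle
    _ = ∑ h ∈ insert e.2 better, v e.1 h := (sum_insert hself).symm
    _ ≤ ∑ h ∈ I.accept e.1, v e.1 h :=
        sum_le_sum_of_subset_of_nonneg (insert_subset he (filter_subset _ _))
          fun h _ _ => (hrange e.1 h).1

lemma IsMaxWeightMatching.weightSum_le_of_add {I : OSMInstance n} {a b : Fin n × Fin n → ℝ}
    {μ ν : Finset (Fin n × Fin n)} (hμ : I.IsMaxWeightMatching (fun e => a e + b e) μ)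
    (hν : I.IsMaxWeightMatching a ν) : weightSum b ν ≤ weightSum b μ := by
  have hsum : weightSum a ν + weightSum b ν ≤ weightSum a μ + weightSum b μ := by
    simpa only [weightSum, sum_add_distrib] using hμ.2 ν hν.1
  have hbase : weightSum a μ ≤ weightSum a ν := hν.2 μ hμ.1
  linarith

/-- The part that thresholds `t`, indexed by rank, add to the weight of an edge: the threshold
itself if the value of the edge reaches it, and `0` otherwise. -/
noncomputable def thresholdBonus (I : OSMInstance n) (v : Fin n → Fin n → ℝ) (t : ℕ → ℝ)
    (e : Fin n × Fin n) : ℝ :=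
  if t (I.edgeRank e) ≤ v e.1 e.2 then t (I.edgeRank e) else 0

lemma weightSum_thresholdBonus_le_SW (I : OSMInstance n) {v : Fin n → Fin n → ℝ}
    (hv : ∀ i h, 0 ≤ v i h) (t : ℕ → ℝ) (μ : Finset (Fin n × Fin n)) :
    weightSum (I.thresholdBonus v t) μ ≤ I.SW v μ := by
  refine sum_le_sum fun e _ => ?_
  rw [thresholdBonus]
  split_ifs with hhigh
  · exact hhigh
  · exact hv e.1 e.2

lemma sum_highValue_le_mul_weightSum_thresholdBonus (I : OSMInstance n)
    {v : Fin n → Fin n → ℝ} {t : ℕ → ℝ} {c : ℝ} {μ : Finset (Fin n × Fin n)}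
    (h : ∀ e ∈ μ, v e.1 e.2 ≤ c * t (I.edgeRank e)) :
    ∑ e ∈ μ.filter (fun e => t (I.edgeRank e) ≤ v e.1 e.2), v e.1 e.2 ≤
      c * weightSum (I.thresholdBonus v t) μ := by
  calc ∑ e ∈ μ.filter (fun e => t (I.edgeRank e) ≤ v e.1 e.2), v e.1 e.2
      ≤ ∑ e ∈ μ.filter (fun e => t (I.edgeRank e) ≤ v e.1 e.2), c * t (I.edgeRank e) :=
        sum_le_sum fun e he => h e (mem_of_mem_filter e he)
    _ = c * weightSum (I.thresholdBonus v t) μ := by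
        rw [← mul_sum, sum_filter]; rfl

end OSMInstance

lemma one_div_le_rpow_mul_threshold {n : ℕ} {t : ℕ → ℝ}
    (ht1 : t 1 = 1 / (n : ℝ) ^ ((1 : ℝ) / 3))
    (ht : ∀ i, 2 ≤ i → i ≤ n →
      t i = 1 / (min (i : ℝ) ((n : ℝ) ^ ((1 : ℝ) / 3)) * (n : ℝ) ^ ((2 : ℝ) / 3)))
    {r : ℕ} (hr : r ∈ Icc 1 n) : 1 / (r : ℝ) ≤ (n : ℝ) ^ ((2 : ℝ) / 3) * t r := by
  obtain ⟨hr1, hrn⟩ := mem_Icc.1 hr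
  have hn1 : (1 : ℝ) ≤ n := by exact_mod_cast hr1.trans hrn
  have hn0 : (0 : ℝ) < n := by positivity
  obtain rfl | hr2 := hr1.eq_or_lt
  · calc 1 / ((1 : ℕ) : ℝ)
        = 1 := by norm_num
      _ ≤ (n : ℝ) ^ ((2 : ℝ) / 3 - 1 / 3) := Real.one_le_rpow hn1 (by norm_num)
      _ = (n : ℝ) ^ ((2 : ℝ) / 3) * t 1 := by rw [ht1, mul_one_div, Real.rpow_sub hn0]
  · have hmin : 0 < min (r : ℝ) ((n : ℝ) ^ ((1 : ℝ) / 3)) := by positivity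
    calc 1 / (r : ℝ)
        ≤ 1 / min (r : ℝ) ((n : ℝ) ^ ((1 : ℝ) / 3)) :=
          one_div_le_one_div_of_le hmin (min_le_left _ _)
      _ = (n : ℝ) ^ ((2 : ℝ) / 3) * t r := by rw [ht r hr2 hrn]; field_simp

theorem highValue_bound_priority_general {n : ℕ} (I : OSMInstance n)
    {v : Fin n → Fin n → ℝ} (hv : I.Consistent v)
    (hsum : ∀ i, ∑ h ∈ I.accept i, v i h ≤ 1)
    {c : ℝ} (hc : 0 ≤ c) {t : ℕ → ℝ} (ht : ∀ r ∈ Icc 1 n, 1 / (r : ℝ) ≤ c * t r)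
    {a w : Fin n × Fin n → ℝ}
    (hw : ∀ e, w e = if t (I.edgeRank e) ≤ v e.1 e.2
      then a e + t (I.edgeRank e) else a e)
    {μ μstar : Finset (Fin n × Fin n)} (hμ : I.IsMaxWeightMatching w μ)
    (hstar : I.IsMaxWeightMatching a μstar) :
    ∑ e ∈ μstar.filter (fun e => t (I.edgeRank e) ≤ v e.1 e.2), v e.1 e.2 ≤
      c * I.SW v μ := by
  have hsplit : w = fun e => a e + I.thresholdBonus v t e := by
    funext e
    rw [hw, OSMInstance.thresholdBonus]
    split_ifs <;> simp
  have hvalue : ∀ e ∈ μstar, v e.1 e.2 ≤ c * t (I.edgeRank e) := fun e he => by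
    have hrank := I.edgeRank_mem_Icc e
    have hpos : (0 : ℝ) < I.edgeRank e := Nat.cast_pos.2 (mem_Icc.1 hrank).1
    refine ((le_div_iff₀' hpos).2 ?_).trans (ht _ hrank)
    exact (hv.edgeRank_mul_le_sum_accept (hstar.1.1 e he)).trans (hsum e.1)
  calc ∑ e ∈ μstar.filter (fun e => t (I.edgeRank e) ≤ v e.1 e.2), v e.1 e.2
      ≤ c * OSMInstance.weightSum (I.thresholdBonus v t) μstar :=
        I.sum_highValue_le_mul_weightSum_thresholdBonus hvalue
    _ ≤ c * OSMInstance.weightSum (I.thresholdBonus v t) μ := by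
        gcongr; exact (hsplit ▸ hμ).weightSum_le_of_add hstar
    _ ≤ c * I.SW v μ := by
        gcongr; exact I.weightSum_thresholdBonus_le_SW (fun i h => (hv.1 i h).1) t μ

/-- the high-value part of any priority-`p` matching has welfare at most
`n^(2/3)` times the welfare of the maximum-weight matching under the non-adaptive
threshold weights shifted by the priorities, for unit-sum valuations and `p ∈ 𝕡`. -/
theorem highValue_bound_priority {n : ℕ} (hn : 2 ≤ n) (I : OSMInstance n)
    (p : ℕ → ℝ) (hp : p ∈ PrioritySet n)
    (v : Fin n → Fin n → ℝ) (hv : I.Consistent v) (hus : I.UnitSum v)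
    (t : ℕ → ℝ) (ht1 : t 1 = 1 / (n : ℝ) ^ ((1 : ℝ) / 3))
    (ht : ∀ i, 2 ≤ i → i ≤ n →
      t i = 1 / (min (i : ℝ) ((n : ℝ) ^ ((1 : ℝ) / 3)) * (n : ℝ) ^ ((2 : ℝ) / 3)))
    (w : Fin n × Fin n → ℝ)
    (hw : ∀ e, w e = if t (I.edgeRank e) ≤ v e.1 e.2
      then p (I.edgeRank e) + t (I.edgeRank e) else p (I.edgeRank e))
    (μ : Finset (Fin n × Fin n)) (hμ : I.IsMaxWeightMatching w μ)
    (μstar : Finset (Fin n × Fin n)) (hstar : I.IsPriorityMatching p μstar) :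
    ∑ e ∈ μstar.filter (fun e => t (I.edgeRank e) ≤ v e.1 e.2), v e.1 e.2 ≤
      (n : ℝ) ^ ((2 : ℝ) / 3) * I.SW v μ :=
  highValue_bound_priority_general I hv (fun i => (hus i).le) (by positivity)
    (fun _ hr => one_div_le_rpow_mul_threshold ht1 ht hr) hw hμ hstar
end
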